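/- Let N ≥ 2, T > 0, M ≥ 1, 1 ≤ q < ∞, and p ∈ (Nq/(N−1), ∞]. Assume v ∈ X_{T,M}. Then for p ∈ (Nq/(N−1), ∞) there exists C > 0, independent of T and M, such that ‖F[v](·,t)‖_{L^p(ℝ^N_+)} ≤ C (1 + t^{1/p}) t^{−1/2} e^{Mt} ‖v‖_{X_{T,M}} for all 0 < t < T. -/

import Mathlib

open MeasureTheory Real Set ENNReal

noncomputable section

abbrev E' (N : ℕ) := EuclideanSpace ℝ (Fin (N - 1))
abbrev HS (N : ℕ) := E' N × ℝ

/-- The half-space `ℝ^N_+ = ℝ^{N-1} × (0,∞)`. -/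
def halfSpace (N : ℕ) : Set (HS N) := {x | 0 < x.2}

/-- The closed half-space `closure(ℝ^N_+)`. -/
def closedHalfSpace (N : ℕ) : Set (HS N) := {x | 0 ≤ x.2}

/-- The Dirichlet heat kernel on the half-space. -/
def GammaD (N : ℕ) (x y : HS N) (t : ℝ) : ℝ :=
  (4 * π * t) ^ (-(N : ℝ) / 2) *
    (Real.exp (-(‖x.1 - y.1‖ ^ 2 + (x.2 - y.2) ^ 2) / (4 * t)) -
      Real.exp (-(‖x.1 - y.1‖ ^ 2 + (x.2 + y.2) ^ 2) / (4 * t)))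

/-- The Dirichlet heat semigroup on the half-space. -/
def S1 (N : ℕ) (t : ℝ) (φ : HS N → ℝ) (x : HS N) : ℝ :=
  ∫ y in halfSpace N, GammaD N x y t * φ y

/-- The normalizing constant `C_N` for the kernel `P`. -/
def PC (N : ℕ) : ℝ :=
  (∫ z : E' N, (1 + ‖z‖ ^ 2) ^ (-(N : ℝ) / 2))⁻¹

/-- The kernel `P(x',x_N,t) = C_N (x_N+t)^{1-N} (1+|x'/(x_N+t)|²)^{-N/2}`. -/
def Pker (N : ℕ) (x' : E' N) (xN t : ℝ) : ℝ :=
  PC N * (xN + t) ^ ((1 : ℝ) - N) * (1 + ‖x'‖ ^ 2 / (xN + t) ^ 2) ^ (-(N : ℝ) / 2)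

/-- The semigroup `[S_2(t)ψ](x) = ∫_{ℝ^{N-1}} P(x'-y',x_N,t) ψ(y') dy'`. -/
def S2 (N : ℕ) (t : ℝ) (ψ : E' N → ℝ) (x : HS N) : ℝ :=
  ∫ y' : E' N, Pker N (x.1 - y') x.2 t * ψ y'

/-- The normal derivative `∂_{x_N} v` of a space-time function `v`. -/
def dN (N : ℕ) (v : HS N → ℝ → ℝ) (x : HS N) (t : ℝ) : ℝ :=
  deriv (fun s => v (x.1, s) t) x.2

/-- The nonlocal operator
`F[v](x,t) = ∫_{ℝ^{N-1}} P(x'-y',x_N,0) ∂_{x_N}v(y',0,t) dy'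
  + ∫_0^t ∫_{ℝ^{N-1}} ∂_t P(x'-y',x_N,t-s) ∂_{x_N}v(y',0,s) dy' ds`. -/
def Fop (N : ℕ) (v : HS N → ℝ → ℝ) (x : HS N) (t : ℝ) : ℝ :=
  (∫ y' : E' N, Pker N (x.1 - y') x.2 0 * dN N v (y', 0) t) +
    ∫ s in Ioo (0 : ℝ) t, ∫ y' : E' N,
      deriv (fun τ => Pker N (x.1 - y') x.2 τ) (t - s) * dN N v (y', 0) s

/-- `D[v](x,t) = ∫_0^t [S_1(t-s)F[v](s)](x) ds`. -/
def Dop (N : ℕ) (v : HS N → ℝ → ℝ) (x : HS N) (t : ℝ) : ℝ :=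
  ∫ s in Ioo (0 : ℝ) t, S1 N (t - s) (fun y => Fop N v y s) x

/-- `L^p` norm on the half-space. -/
def hLpNorm (N : ℕ) (p : ℝ≥0∞) (f : HS N → ℝ) : ℝ≥0∞ :=
  eLpNorm f p (volume.restrict (halfSpace N))

/-- `L^r` norm on the boundary `ℝ^{N-1}`. -/
def bLpNorm (N : ℕ) (r : ℝ≥0∞) (g : E' N → ℝ) : ℝ≥0∞ :=
  eLpNorm g r (volume : Measure (E' N))

/-- `E[v](t) = t^{(N/2)(1/q-1/p)} [‖v(t)‖_{L^p} + t^{1/2} ‖∂_{x_N}v(t)‖_{L^p}]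
  + sup_{q≤r≤p} t^{1/2} ‖∂_{x_N}v(·,0,t)‖_{L^r(ℝ^{N-1})}`. -/
def Enorm (N : ℕ) (q p : ℝ≥0∞) (v : HS N → ℝ → ℝ) (t : ℝ) : ℝ≥0∞ :=
  ENNReal.ofReal (t ^ ((N : ℝ) / 2 * ((q⁻¹).toReal - (p⁻¹).toReal))) *
      (hLpNorm N p (fun x => v x t) +
        ENNReal.ofReal (t ^ ((1 : ℝ) / 2)) * hLpNorm N p (fun x => dN N v x t)) +
    ⨆ r ∈ Icc q p, ENNReal.ofReal (t ^ ((1 : ℝ) / 2)) *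
      bLpNorm N r (fun x' => dN N v (x', 0) t)

/-- The norm of the space `X_{T,M}`: `‖v‖_{X_{T,M}} = sup_{0<t<T} e^{-Mt} E[v](t)`. -/
def XNorm (N : ℕ) (q p : ℝ≥0∞) (T M : ℝ) (v : HS N → ℝ → ℝ) : ℝ≥0∞ :=
  ⨆ t ∈ Ioo (0 : ℝ) T, ENNReal.ofReal (Real.exp (-M * t)) * Enorm N q p v t

/-- Membership in `X_{T,M}`: `v, ∂_{x_N}v ∈ C(closure(ℝ^N_+) × (0,T))` and
`‖v‖_{X_{T,M}} < ∞`. -/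
def memX (N : ℕ) (q p : ℝ≥0∞) (T M : ℝ) (v : HS N → ℝ → ℝ) : Prop :=
  ContinuousOn (fun z : HS N × ℝ => v z.1 z.2) (closedHalfSpace N ×ˢ Ioo 0 T) ∧
  ContinuousOn (fun z : HS N × ℝ => dN N v z.1 z.2) (closedHalfSpace N ×ˢ Ioo 0 T) ∧
  XNorm N q p T M v < ∞

/-! `F[v](·, t)` is the Poisson extension of the trace `∂_N v(·, 0, t)` plus a time integral.
Since `|∂_t P| ≤ N P / (x_N + t)`, the integrand at time `s` is dominated by `(x_N + t - s)⁻¹` times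
the Poisson extension of `|∂_N v(·, 0, s)|` at height `x_N + t - s`, whose `L^p` norm on the
half-space is at most a multiple of `(t - s)^{1/p - 1} ‖∂_N v(·, 0, s)‖_p`. Minkowski's inequality
and a beta integral against `s^{-1/2}` yield `t^{1/p - 1/2}`. The first term is controlled by the
`L^p` and `L^q` norms of the trace, hence by `t^{-1/2}`. -/

open scoped NNReal

section LpInequalities

variable {α β : Type*} [MeasurableSpace α] [MeasurableSpace β] {μ : Measure α} {ν : Measure β}

lemma ennreal_rpow_sub_one_mul_self (a : ℝ≥0∞) {r : ℝ} (hr : 1 ≤ r) : a ^ (r - 1) * a = a ^ r := by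
  nth_rw 2 [← ENNReal.rpow_one a]
  rw [← ENNReal.rpow_add_of_nonneg _ _ (sub_nonneg.2 hr) zero_le_one, sub_add_cancel]

lemma rpow_lintegral_mul_le {k g : α → ℝ≥0∞} (hk : AEMeasurable k μ) (hg : AEMeasurable g μ)
    {r : ℝ} (hr : 1 ≤ r) :
    (∫⁻ y, k y * g y ∂μ) ^ r ≤ (∫⁻ y, k y ∂μ) ^ (r - 1) * ∫⁻ y, k y * g y ^ r ∂μ := by
  have hr0 : 0 < r := one_pos.trans_le hr
  have hinv : 0 ≤ 1 - r⁻¹ := sub_nonneg.2 (inv_le_one_of_one_le₀ hr)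
  have split (y : α) : k y * g y = k y ^ (1 - r⁻¹) * (k y * g y ^ r) ^ r⁻¹ := by
    rw [ENNReal.mul_rpow_of_nonneg _ _ (inv_nonneg.2 hr0.le), ← ENNReal.rpow_mul,
      mul_inv_cancel₀ hr0.ne', ENNReal.rpow_one, ← mul_assoc,
      ← ENNReal.rpow_add_of_nonneg _ _ hinv (inv_nonneg.2 hr0.le), sub_add_cancel,
      ENNReal.rpow_one]
  calc (∫⁻ y, k y * g y ∂μ) ^ r
      = (∫⁻ y, k y ^ (1 - r⁻¹) * (k y * g y ^ r) ^ r⁻¹ ∂μ) ^ r := by simp_rw [← split]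
    _ ≤ ((∫⁻ y, k y ∂μ) ^ (1 - r⁻¹) * (∫⁻ y, k y * g y ^ r ∂μ) ^ r⁻¹) ^ r := by
        gcongr
        exact ENNReal.lintegral_mul_norm_pow_le hk (hk.mul (hg.pow_const r)) hinv
          (inv_nonneg.2 hr0.le) (sub_add_cancel _ _)
    _ = (∫⁻ y, k y ∂μ) ^ (r - 1) * ∫⁻ y, k y * g y ^ r ∂μ := by
        rw [ENNReal.mul_rpow_of_nonneg _ _ hr0.le, ← ENNReal.rpow_mul, ← ENNReal.rpow_mul,
          inv_mul_cancel₀ hr0.ne', ENNReal.rpow_one, sub_mul, inv_mul_cancel₀ hr0.ne', one_mul]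

lemma rpow_lintegral_mul_le_of_le {k g : α → ℝ≥0∞} (hk : AEMeasurable k μ) (hg : Measurable g)
    {B : ℝ≥0∞} (hk1 : ∫⁻ y, k y ∂μ ≤ 1) (hkB : ∀ y, k y ≤ B) {p q : ℝ} (hq : 1 ≤ q)
    (hqp : q ≤ p) :
    (∫⁻ y, k y * g y ∂μ) ^ p ≤
      (B * ∫⁻ y, g y ^ q ∂μ) ^ (p / q - 1) * ∫⁻ y, k y * g y ^ q ∂μ := by
  have hq0 : 0 < q := one_pos.trans_le hq
  have hpq : 1 ≤ p / q := (one_le_div hq0).2 hqp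
  have jensen : (∫⁻ y, k y * g y ∂μ) ^ q ≤ ∫⁻ y, k y * g y ^ q ∂μ :=
    (rpow_lintegral_mul_le hk hg.aemeasurable hq).trans <|
      mul_le_of_le_one_left' (ENNReal.rpow_le_one hk1 (sub_nonneg.2 hq))
  have sup_bound : ∫⁻ y, k y * g y ^ q ∂μ ≤ B * ∫⁻ y, g y ^ q ∂μ := by
    rw [← lintegral_const_mul _ (hg.pow_const _)]
    exact lintegral_mono fun y => mul_le_mul_left (hkB y) _
  calc (∫⁻ y, k y * g y ∂μ) ^ p
      = ((∫⁻ y, k y * g y ∂μ) ^ q) ^ (p / q) := by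
        rw [← ENNReal.rpow_mul, mul_div_cancel₀ _ hq0.ne']
    _ ≤ (∫⁻ y, k y * g y ^ q ∂μ) ^ (p / q) := by gcongr
    _ = (∫⁻ y, k y * g y ^ q ∂μ) ^ (p / q - 1) * ∫⁻ y, k y * g y ^ q ∂μ :=
        (ennreal_rpow_sub_one_mul_self _ hpq).symm
    _ ≤ _ := mul_le_mul_left (ENNReal.rpow_le_rpow sup_bound (sub_nonneg.2 hpq)) _

lemma eLpNorm_ennreal_const_mul (c : ℝ≥0∞) {f : α → ℝ≥0∞} (hf : Measurable f) {p : ℝ≥0}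
    (hp : p ≠ 0) : eLpNorm (fun x => c * f x) p μ = c * eLpNorm f p μ := by
  have hp0 : (0 : ℝ) < p := NNReal.coe_pos.2 (pos_iff_ne_zero.2 hp)
  refine ENNReal.rpow_left_injective hp0.ne' ?_
  simp only [eLpNorm_nnreal_pow_eq_lintegral hp, enorm_eq_self,
    ENNReal.mul_rpow_of_nonneg _ _ hp0.le]
  rw [lintegral_const_mul _ (hf.pow_const _)]

variable [SFinite μ]

lemma measurable_eLpNorm_left {F : α → β → ℝ≥0∞} (hF : Measurable (Function.uncurry F))
    {p : ℝ≥0} (hp : p ≠ 0) : Measurable fun y => eLpNorm (fun x => F x y) p μ := by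
  simp only [eLpNorm_nnreal_eq_lintegral hp, enorm_eq_self]
  exact (hF.pow_const _).lintegral_prod_left'.pow_const _

variable [SFinite ν]

lemma ae_ae_eq_eLpNorm_mul_div {F : α → β → ℝ≥0∞} (hF : Measurable (Function.uncurry F))
    {p : ℝ≥0} (hp : p ≠ 0) (hfin : ∫⁻ y, eLpNorm (fun x => F x y) p μ ∂ν ≠ ∞) :
    ∀ᵐ x ∂μ, ∀ᵐ y ∂ν,
      F x y = eLpNorm (fun x => F x y) p μ * (F x y / eLpNorm (fun x => F x y) p μ) := by
  have hw : Measurable fun y => eLpNorm (fun x => F x y) p μ := measurable_eLpNorm_left hF hp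
  have hmeas : MeasurableSet {z : α × β | F z.1 z.2 =
      eLpNorm (fun x => F x z.2) p μ * (F z.1 z.2 / eLpNorm (fun x => F x z.2) p μ)} :=
    measurableSet_eq_fun hF ((hw.comp measurable_snd).mul (hF.div (hw.comp measurable_snd)))
  refine (Measure.ae_ae_comm hmeas).2 ?_
  filter_upwards [ae_lt_top hw hfin] with y hy
  rcases eq_or_ne (eLpNorm (fun x => F x y) p μ) 0 with hy0 | hy0
  · have hFy : Measurable fun x => F x y := hF.comp measurable_prodMk_right
    filter_upwards [(eLpNorm_eq_zero_iff hFy.aestronglyMeasurable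
      (by exact_mod_cast hp)).1 hy0] with x hx
    simp [hx, hy0]
  · exact .of_forall fun x => (ENNReal.mul_div_cancel hy0 hy.ne).symm

-- Minkowski's integral inequality, by Jensen for the weight `w y = ‖F(·, y)‖_p`.
theorem eLpNorm_lintegral_le {F : α → β → ℝ≥0∞} (hF : Measurable (Function.uncurry F))
    {p : ℝ≥0} (hp : 1 ≤ p) :
    eLpNorm (fun x => ∫⁻ y, F x y ∂ν) p μ ≤ ∫⁻ y, eLpNorm (fun x => F x y) p μ ∂ν := by
  have hp0 : p ≠ 0 := (one_pos.trans_le hp).ne'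
  have hFx (x : α) : Measurable (F x) := hF.comp measurable_prodMk_left
  have hFy (y : β) : Measurable fun x => F x y := hF.comp measurable_prodMk_right
  set w : β → ℝ≥0∞ := fun y => eLpNorm (fun x => F x y) p μ with hw
  have hwp (y : β) : ∫⁻ x, F x y ^ (p : ℝ) ∂μ = w y ^ (p : ℝ) := by
    simp only [hw, eLpNorm_nnreal_pow_eq_lintegral hp0, enorm_eq_self]
  have hwm : Measurable w := measurable_eLpNorm_left hF hp0
  rcases eq_or_ne (∫⁻ y, w y ∂ν) ∞ with hW | hW
  · exact hW ▸ le_top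
  have hquot : Measurable fun z : α × β => w z.2 * (F z.1 z.2 / w z.2) ^ (p : ℝ) :=
    (hwm.comp measurable_snd).mul ((hF.div (hwm.comp measurable_snd)).pow_const _)
  refine (ENNReal.rpow_le_rpow_iff (NNReal.coe_pos.2 (one_pos.trans_le hp))).1 ?_
  calc eLpNorm (fun x => ∫⁻ y, F x y ∂ν) p μ ^ (p : ℝ)
      = ∫⁻ x, (∫⁻ y, F x y ∂ν) ^ (p : ℝ) ∂μ := by
        simp only [eLpNorm_nnreal_pow_eq_lintegral hp0, enorm_eq_self]
    _ ≤ ∫⁻ x, (∫⁻ y, w y ∂ν) ^ (p - 1 : ℝ) * ∫⁻ y, w y * (F x y / w y) ^ (p : ℝ) ∂ν ∂μ := by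
        refine lintegral_mono_ae ?_
        filter_upwards [ae_ae_eq_eLpNorm_mul_div hF hp0 hW] with x hx
        rw [lintegral_congr_ae hx]
        exact rpow_lintegral_mul_le hwm.aemeasurable ((hFx x).div hwm).aemeasurable hp
    _ = (∫⁻ y, w y ∂ν) ^ (p - 1 : ℝ) * ∫⁻ y, ∫⁻ x, w y * (F x y / w y) ^ (p : ℝ) ∂μ ∂ν := by
        rw [lintegral_const_mul _ hquot.lintegral_prod_right',
          lintegral_lintegral_swap hquot.aemeasurable]
    _ ≤ (∫⁻ y, w y ∂ν) ^ (p - 1 : ℝ) * ∫⁻ y, w y ∂ν := by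
        gcongr with y
        simp_rw [div_eq_mul_inv, ENNReal.mul_rpow_of_nonneg _ _ p.coe_nonneg, ENNReal.inv_rpow]
        rw [lintegral_const_mul _ (((hFy y).pow_const _).mul_const _),
          lintegral_mul_const _ ((hFy y).pow_const _), hwp]
        exact mul_le_of_le_one_right' (ENNReal.mul_inv_le_one _)
    _ = (∫⁻ y, w y ∂ν) ^ (p : ℝ) := ennreal_rpow_sub_one_mul_self _ hp

theorem eLpNorm_lintegral_mul_le_of_le {K : α → β → ℝ≥0∞}
    (hK : Measurable (Function.uncurry K)) {B : ℝ≥0∞} (hB : ∀ x y, K x y ≤ B)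
    (hKβ : ∀ x, ∫⁻ y, K x y ∂ν ≤ 1) (hKα : ∀ y, ∫⁻ x, K x y ∂μ ≤ 1) {g : β → ℝ≥0∞}
    (hg : Measurable g) {p q : ℝ≥0} (hq : 1 ≤ q) (hqp : q ≤ p) :
    eLpNorm (fun x => ∫⁻ y, K x y * g y ∂ν) p μ ≤ B ^ (1 / q - 1 / p : ℝ) * eLpNorm g q ν := by
  have hq0 : 0 < q := one_pos.trans_le hq
  have hp0 : 0 < p := hq0.trans_le hqp
  have hqp' : (1 : ℝ) ≤ p / q := (one_le_div (NNReal.coe_pos.2 hq0)).2 hqp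
  have hgq : ∫⁻ y, g y ^ (q : ℝ) ∂ν = eLpNorm g q ν ^ (q : ℝ) := by
    simp only [eLpNorm_nnreal_pow_eq_lintegral hq0.ne', enorm_eq_self]
  have hKg : Measurable fun z : α × β => K z.1 z.2 * g z.2 ^ (q : ℝ) :=
    hK.mul ((hg.pow_const _).comp measurable_snd)
  have mass : ∫⁻ x, ∫⁻ y, K x y * g y ^ (q : ℝ) ∂ν ∂μ ≤ eLpNorm g q ν ^ (q : ℝ) := by
    rw [lintegral_lintegral_swap hKg.aemeasurable, ← hgq]
    refine lintegral_mono fun y => ?_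
    have hKy : Measurable fun x => K x y := hK.comp measurable_prodMk_right
    rw [lintegral_mul_const _ hKy]
    exact mul_le_of_le_one_left' (hKα y)
  refine (ENNReal.rpow_le_rpow_iff (NNReal.coe_pos.2 hp0)).1 ?_
  calc eLpNorm (fun x => ∫⁻ y, K x y * g y ∂ν) p μ ^ (p : ℝ)
      = ∫⁻ x, (∫⁻ y, K x y * g y ∂ν) ^ (p : ℝ) ∂μ := by
        simp only [eLpNorm_nnreal_pow_eq_lintegral hp0.ne', enorm_eq_self]
    _ ≤ ∫⁻ x, (B * eLpNorm g q ν ^ (q : ℝ)) ^ (p / q - 1 : ℝ) *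
          ∫⁻ y, K x y * g y ^ (q : ℝ) ∂ν ∂μ := by
        refine lintegral_mono fun x => ?_
        rw [← hgq]
        exact rpow_lintegral_mul_le_of_le (hK.comp measurable_prodMk_left).aemeasurable hg
          (hKβ x) (hB x) hq hqp
    _ ≤ (B * eLpNorm g q ν ^ (q : ℝ)) ^ (p / q - 1 : ℝ) * eLpNorm g q ν ^ (q : ℝ) := by
        rw [lintegral_const_mul _ hKg.lintegral_prod_right']
        gcongr
    _ = (B ^ (1 / q - 1 / p : ℝ) * eLpNorm g q ν) ^ (p : ℝ) := by
        have : (1 / q - 1 / p : ℝ) * p = p / q - 1 := by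
          have := (NNReal.coe_pos.2 hp0).ne'
          field_simp
        rw [ENNReal.mul_rpow_of_nonneg _ _ (sub_nonneg.2 hqp'), mul_assoc,
          ennreal_rpow_sub_one_mul_self _ hqp', ENNReal.mul_rpow_of_nonneg _ _ p.coe_nonneg,
          ← ENNReal.rpow_mul, ← ENNReal.rpow_mul, this,
          mul_div_cancel₀ _ (NNReal.coe_pos.2 hq0).ne']

end LpInequalities

section PowerIntegrals

lemma lintegral_Ioi_rpow_of_lt {a c : ℝ} (ha : a < -1) (hc : 0 < c) :
    ∫⁻ z in Ioi c, ENNReal.ofReal (z ^ a) = ENNReal.ofReal (-c ^ (a + 1) / (a + 1)) := by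
  rw [← integral_Ioi_rpow_of_lt ha hc, ofReal_integral_eq_lintegral_ofReal
    (integrableOn_Ioi_rpow_of_lt ha hc)]
  exact ae_restrict_of_forall_mem measurableSet_Ioi
    fun z hz => Real.rpow_nonneg (hc.trans hz).le _

lemma lintegral_Ioi_add_rpow_of_lt {a c : ℝ} (ha : a < -1) (hc : 0 < c) :
    ∫⁻ z in Ioi 0, ENNReal.ofReal ((z + c) ^ a) = ENNReal.ofReal (-c ^ (a + 1) / (a + 1)) := by
  have h := (measurePreserving_add_right volume c).setLIntegral_comp_preimage
    (measurableSet_Ioi (a := c)) (f := fun z => ENNReal.ofReal (z ^ a)) (by fun_prop)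
  rwa [preimage_add_const_Ioi, sub_self, lintegral_Ioi_rpow_of_lt ha hc] at h

lemma lintegral_Ioo_zero_one_rpow_mul_rpow {a b : ℝ} (ha : 0 < a) (hb : 0 < b) :
    ∫⁻ u in Ioo (0 : ℝ) 1, ENNReal.ofReal (u ^ (a - 1) * (1 - u) ^ (b - 1)) =
      ENNReal.ofReal (ProbabilityTheory.beta a b) := by
  have hB := ProbabilityTheory.beta_pos ha hb
  have h := ProbabilityTheory.lintegral_betaPDF_eq_one ha hb
  simp_rw [ProbabilityTheory.lintegral_betaPDF, mul_assoc,
    ENNReal.ofReal_mul (one_div_pos.2 hB).le] at h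
  rw [lintegral_const_mul _ (by fun_prop)] at h
  rw [← mul_one (ENNReal.ofReal (ProbabilityTheory.beta a b)), ← h, ← mul_assoc,
    ← ENNReal.ofReal_mul hB.le, mul_one_div_cancel hB.ne', ENNReal.ofReal_one, one_mul]

lemma lintegral_Ioo_rpow_mul_sub_rpow {a b t : ℝ} (ha : 0 < a) (hb : 0 < b) (ht : 0 < t) :
    ∫⁻ s in Ioo 0 t, ENNReal.ofReal (s ^ (a - 1) * (t - s) ^ (b - 1)) =
      ENNReal.ofReal (t ^ (a + b - 1) * ProbabilityTheory.beta a b) := by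
  have himage : (t * ·) '' Ioo 0 1 = Ioo 0 t := by
    rw [image_mul_left_Ioo ht, mul_zero, mul_one]
  have hscale (u : ℝ) (hu : u ∈ Ioo (0 : ℝ) 1) :
      |t| * ((t * u) ^ (a - 1) * (t - t * u) ^ (b - 1)) =
        t ^ (a + b - 1) * (u ^ (a - 1) * (1 - u) ^ (b - 1)) := by
    rw [← mul_one_sub, Real.mul_rpow ht.le hu.1.le, Real.mul_rpow ht.le (sub_pos.2 hu.2).le,
      show a + b - 1 = (a - 1) + (b - 1) + 1 by ring, Real.rpow_add_one ht.ne', Real.rpow_add ht,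
      abs_of_pos ht]
    ring
  have hderiv (u : ℝ) (_ : u ∈ Ioo (0 : ℝ) 1) : HasDerivWithinAt (t * ·) t (Ioo 0 1) u := by
    simpa using ((hasDerivAt_id u).const_mul t).hasDerivWithinAt
  rw [← himage, lintegral_image_eq_lintegral_abs_deriv_mul measurableSet_Ioo hderiv
    (mul_right_injective₀ ht.ne').injOn, ENNReal.ofReal_mul (by positivity),
    ← lintegral_Ioo_zero_one_rpow_mul_rpow ha hb, ← lintegral_const_mul _ (by fun_prop)]
  refine setLIntegral_congr_fun measurableSet_Ioo fun u hu => ?_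
  rw [← ENNReal.ofReal_mul (abs_nonneg t), hscale u hu, ENNReal.ofReal_mul (by positivity)]

end PowerIntegrals

section PoissonKernel

variable {N : ℕ}

lemma PC_nonneg (N : ℕ) : 0 ≤ PC N :=
  inv_nonneg.2 (integral_nonneg fun _ => by positivity)

lemma Pker_eq_Pker_add_zero (y : E' N) (z τ : ℝ) : Pker N y z τ = Pker N y (z + τ) 0 := by
  simp only [Pker, add_zero]

lemma Pker_zero_eq_rpow_mul (y : E' N) (a : ℝ) :
    Pker N y a 0 = a ^ ((1 : ℝ) - N) * Pker N (a⁻¹ • y) 1 0 := by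
  have hnorm : ‖a⁻¹ • y‖ ^ 2 = ‖y‖ ^ 2 / a ^ 2 := by
    rw [norm_smul, norm_inv, mul_pow, inv_pow, Real.norm_eq_abs, sq_abs, div_eq_inv_mul]
  simp only [Pker, add_zero, Real.one_rpow, hnorm, one_pow, div_one, mul_one]
  ring

lemma Pker_nonneg (y : E' N) {a : ℝ} (ha : 0 ≤ a) : 0 ≤ Pker N y a 0 := by
  have := PC_nonneg N
  unfold Pker
  positivity

lemma Pker_le (y : E' N) {a : ℝ} (ha : 0 ≤ a) : Pker N y a 0 ≤ PC N * a ^ ((1 : ℝ) - N) := by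
  have hbase : 1 ≤ 1 + ‖y‖ ^ 2 / a ^ 2 := le_add_of_nonneg_right (by positivity)
  have hexp : -(N : ℝ) / 2 ≤ 0 := by
    rw [neg_div, neg_nonpos]
    positivity
  rw [Pker, add_zero]
  exact mul_le_of_le_one_right (mul_nonneg (PC_nonneg N) (by positivity))
    (Real.rpow_le_one_of_one_le_of_nonpos hbase hexp)

lemma measurable_Pker : Measurable fun z : E' N × ℝ => Pker N z.1 z.2 0 := by
  unfold Pker
  fun_prop

lemma finrank_E' (hN : 1 ≤ N) : (Module.finrank ℝ (E' N) : ℝ) = N - 1 := by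
  rw [finrank_euclideanSpace_fin, Nat.cast_pred hN]

lemma integrable_one_add_norm_sq_rpow (hN : 1 ≤ N) :
    Integrable fun z : E' N => (1 + ‖z‖ ^ 2) ^ (-(N : ℝ) / 2) :=
  integrable_rpow_neg_one_add_norm_sq (by linarith [finrank_E' hN])

lemma Pker_one_zero (z : E' N) : Pker N z 1 0 = PC N * (1 + ‖z‖ ^ 2) ^ (-(N : ℝ) / 2) := by
  simp [Pker]

lemma integral_Pker_one (hN : 1 ≤ N) : ∫ z : E' N, Pker N z 1 0 = 1 := by
  have hpos : 0 < ∫ z : E' N, (1 + ‖z‖ ^ 2) ^ (-(N : ℝ) / 2) := by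
    refine (integral_pos_iff_support_of_nonneg (fun z => by positivity)
      (integrable_one_add_norm_sq_rpow hN)).2 ?_
    rw [Function.support_eq_univ fun z => by positivity]
    exact Measure.measure_univ_pos.2 (NeZero.ne _)
  simp_rw [Pker_one_zero, integral_const_mul, PC]
  exact inv_mul_cancel₀ hpos.ne'

lemma integrable_Pker (hN : 1 ≤ N) {a : ℝ} (ha : 0 < a) :
    Integrable fun y : E' N => Pker N y a 0 := by
  have h : Integrable fun z : E' N => Pker N z 1 0 := by
    simpa only [Pker_one_zero] using (integrable_one_add_norm_sq_rpow hN).const_mul (PC N)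
  simpa only [Pker_zero_eq_rpow_mul _ a] using
    (h.comp_smul (inv_ne_zero ha.ne')).const_mul (a ^ ((1 : ℝ) - N))

theorem integral_Pker (hN : 1 ≤ N) {a : ℝ} (ha : 0 < a) : ∫ y : E' N, Pker N y a 0 = 1 := by
  simp_rw [Pker_zero_eq_rpow_mul _ a, integral_const_mul]
  rw [Measure.integral_comp_inv_smul_of_nonneg _ (fun z => Pker N z 1 0) ha.le,
    integral_Pker_one hN, smul_eq_mul, mul_one, ← Real.rpow_natCast, ← Real.rpow_add ha,
    finrank_E' hN, sub_add_sub_cancel, sub_self, Real.rpow_zero]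

lemma lintegral_enorm_Pker (hN : 1 ≤ N) {a : ℝ} (ha : 0 < a) :
    ∫⁻ y : E' N, ‖Pker N y a 0‖ₑ = 1 := by
  simp_rw [Real.enorm_of_nonneg (Pker_nonneg _ ha.le)]
  rw [← ofReal_integral_eq_lintegral_ofReal (integrable_Pker hN ha)
    (.of_forall fun y => Pker_nonneg y ha.le), integral_Pker hN ha, ENNReal.ofReal_one]

lemma hasDerivAt_Pker_zero (y : E' N) {a : ℝ} (ha : 0 < a) :
    HasDerivAt (fun b => Pker N y b 0)
      ((1 - N + N * (‖y‖ ^ 2 / (a ^ 2 + ‖y‖ ^ 2))) / a * Pker N y a 0) a := by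
  have hbase : 0 < 1 + ‖y‖ ^ 2 / a ^ 2 := by positivity
  have power : HasDerivAt (fun b : ℝ => PC N * b ^ ((1 : ℝ) - N))
      (PC N * ((1 - N) * a ^ ((1 : ℝ) - N - 1))) a :=
    (Real.hasDerivAt_rpow_const (.inl ha.ne')).const_mul _
  have base : HasDerivAt (fun b : ℝ => 1 + ‖y‖ ^ 2 / b ^ 2)
      (‖y‖ ^ 2 * (-(2 * a) / (a ^ 2) ^ 2)) a := by
    simpa [div_eq_mul_inv] using
      (((hasDerivAt_pow 2 a).inv (pow_ne_zero 2 ha.ne')).const_mul (‖y‖ ^ 2)).const_add 1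
  have hdiff := power.mul (base.rpow_const (p := -(N : ℝ) / 2) (.inl hbase.ne'))
  simp only [Pker, add_zero]
  refine hdiff.congr_deriv ?_
  rw [Real.rpow_sub_one ha.ne', Real.rpow_sub_one hbase.ne']
  field_simp

theorem abs_deriv_Pker_le (hN : 1 ≤ N) (y : E' N) {z τ : ℝ} (h : 0 < z + τ) :
    |deriv (fun σ => Pker N y z σ) τ| ≤ N * ((z + τ)⁻¹ * Pker N y (z + τ) 0) := by
  have hN' : (1 : ℝ) ≤ N := by exact_mod_cast hN
  have hderiv : deriv (fun σ => Pker N y z σ) τ = deriv (fun b => Pker N y b 0) (z + τ) := by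
    simp_rw [Pker_eq_Pker_add_zero y z]
    exact deriv_comp_const_add (f := fun b => Pker N y b 0) z τ
  set θ : ℝ := ‖y‖ ^ 2 / ((z + τ) ^ 2 + ‖y‖ ^ 2)
  have hθ0 : 0 ≤ θ := by positivity
  have hθ1 : θ ≤ 1 := div_le_one_of_le₀ (by nlinarith) (by positivity)
  have hfactor : |1 - N + N * θ| ≤ N := abs_le.2 ⟨by nlinarith, by nlinarith⟩
  rw [hderiv, (hasDerivAt_Pker_zero y h).deriv, abs_mul, abs_div, abs_of_pos h,
    abs_of_nonneg (Pker_nonneg y h.le), div_eq_mul_inv, mul_assoc]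
  have := Pker_nonneg y h.le
  gcongr

end PoissonKernel

section PoissonExtension

variable {N : ℕ}

/-- The Poisson extension at height `a` of boundary data `g`, evaluated at `(x', a)`. The data take
values in `ℝ≥0∞`, so that it is defined without any integrability requirement. -/
def poissonExt (N : ℕ) (g : E' N → ℝ≥0∞) (a : ℝ) (x' : E' N) : ℝ≥0∞ :=
  ∫⁻ y, ‖Pker N (x' - y) a 0‖ₑ * g y

lemma measurable_poissonExt {γ : Type*} [MeasurableSpace γ] {g : γ → E' N → ℝ≥0∞} {a : γ → ℝ}
    {x : γ → E' N} (hg : Measurable (Function.uncurry g)) (ha : Measurable a) (hx : Measurable x) :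
    Measurable fun c => poissonExt N (g c) (a c) (x c) := by
  have hkernel : Measurable fun z : γ × E' N => Pker N (x z.1 - z.2) (a z.1) 0 :=
    measurable_Pker.comp (((hx.comp measurable_fst).sub measurable_snd).prodMk
      (ha.comp measurable_fst))
  exact (hkernel.enorm.mul hg).lintegral_prod_right'

lemma eLpNorm_poissonExt_le (hN : 1 ≤ N) {a : ℝ} (ha : 0 < a) {g : E' N → ℝ≥0∞}
    (hg : Measurable g) {p q : ℝ≥0} (hq : 1 ≤ q) (hqp : q ≤ p) :
    eLpNorm (poissonExt N g a) p volume ≤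
      ENNReal.ofReal (PC N * a ^ ((1 : ℝ) - N)) ^ (1 / q - 1 / p : ℝ) * eLpNorm g q volume := by
  have hkernel : Measurable fun z : E' N × E' N => ‖Pker N (z.1 - z.2) a 0‖ₑ :=
    (measurable_Pker.comp ((measurable_fst.sub measurable_snd).prodMk measurable_const)).enorm
  refine eLpNorm_lintegral_mul_le_of_le hkernel (fun x y => ?_) (fun x => ?_) (fun y => ?_)
    hg hq hqp
  · rw [Real.enorm_of_nonneg (Pker_nonneg _ ha.le)]
    exact ENNReal.ofReal_le_ofReal (Pker_le _ ha.le)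
  · rw [lintegral_sub_left_eq_self (fun y => ‖Pker N y a 0‖ₑ), lintegral_enorm_Pker hN ha]
  · rw [lintegral_sub_right_eq_self (fun x => ‖Pker N x a 0‖ₑ), lintegral_enorm_Pker hN ha]

lemma eLpNorm_poissonExt_le_self (hN : 1 ≤ N) {a : ℝ} (ha : 0 < a) {g : E' N → ℝ≥0∞}
    (hg : Measurable g) {p : ℝ≥0} (hp : 1 ≤ p) :
    eLpNorm (poissonExt N g a) p volume ≤ eLpNorm g p volume := by
  simpa using eLpNorm_poissonExt_le hN ha hg hp le_rfl

lemma eLpNorm_halfSpace_rpow {f : HS N → ℝ≥0∞} (hf : Measurable f) {p : ℝ≥0} (hp : p ≠ 0) :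
    eLpNorm f p (volume.restrict (halfSpace N)) ^ (p : ℝ) =
      ∫⁻ z in Ioi (0 : ℝ), eLpNorm (fun x' => f (x', z)) p volume ^ (p : ℝ) := by
  have hset : halfSpace N = univ ×ˢ Ioi (0 : ℝ) := by
    ext
    simp [halfSpace]
  simp only [eLpNorm_nnreal_pow_eq_lintegral hp, enorm_eq_self]
  rw [hset, Measure.volume_eq_prod, ← Measure.prod_restrict, Measure.restrict_univ,
    lintegral_prod_symm' _ (hf.pow_const _)]

section Exponents

variable {p q : ℝ≥0}

lemma one_le_dim_of_mul_lt (hqp : (N * q : ℝ) < p * (N - 1)) : 1 ≤ N := by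
  rw [Nat.one_le_iff_ne_zero]
  rintro rfl
  norm_num at hqp

lemma lt_of_dim_mul_lt (hqp : (N * q : ℝ) < p * (N - 1)) : q < p := by
  by_contra! h
  nlinarith [p.coe_nonneg, (N.cast_nonneg : (0 : ℝ) ≤ N)]

lemma one_sub_dim_mul_lt (hqp : (N * q : ℝ) < p * (N - 1)) (hq : 0 < q) (hp : 0 < p) :
    (1 - N : ℝ) * ((1 / q - 1 / p) * p) < -1 := by
  have hq' := NNReal.coe_pos.2 hq
  have : (1 - N : ℝ) * ((1 / q - 1 / p) * p) = (1 - N) * (p - q) / q := by field_simp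
  rw [this, div_lt_iff₀ hq']
  linarith

end Exponents

lemma lintegral_Ioi_one_poissonBound_ne_top {e : ℝ} (he : 0 ≤ e) (hNe : (1 - N : ℝ) * e < -1) :
    ∫⁻ z in Ioi (1 : ℝ), ENNReal.ofReal (PC N * z ^ ((1 : ℝ) - N)) ^ e ≠ ∞ := by
  have hpow (z : ℝ) (hz : z ∈ Ioi (1 : ℝ)) : ENNReal.ofReal (PC N * z ^ ((1 : ℝ) - N)) ^ e =
      ENNReal.ofReal (PC N ^ e) * ENNReal.ofReal (z ^ ((1 - N : ℝ) * e)) := by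
    have hz0 : 0 ≤ z := zero_le_one.trans (le_of_lt hz)
    have hP := PC_nonneg N
    rw [ENNReal.ofReal_rpow_of_nonneg (by positivity) he, Real.mul_rpow hP (by positivity),
      ← Real.rpow_mul hz0, ENNReal.ofReal_mul (by positivity)]
  rw [setLIntegral_congr_fun measurableSet_Ioi hpow, lintegral_const_mul _ (by fun_prop),
    lintegral_Ioi_rpow_of_lt hNe one_pos]
  exact ENNReal.mul_ne_top ENNReal.ofReal_ne_top ENNReal.ofReal_ne_top

-- Near the boundary the extension contracts `L^p`; far from it, it decays from `L^q` to `L^p`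
-- at a rate that is `p`-integrable exactly when `p > N q / (N - 1)`.
theorem exists_eLpNorm_poissonExt_halfSpace_le {p q : ℝ≥0} (hq : 1 ≤ q)
    (hqp : (N * q : ℝ) < p * (N - 1)) :
    ∃ C : ℝ≥0, ∀ g : E' N → ℝ≥0∞, Measurable g →
      eLpNorm (fun x : HS N => poissonExt N g x.2 x.1) p (volume.restrict (halfSpace N)) ≤
        eLpNorm g p volume + C * eLpNorm g q volume := by
  have hN : 1 ≤ N := one_le_dim_of_mul_lt hqp
  have hqp' : q ≤ p := (lt_of_dim_mul_lt hqp).le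
  have hp : 1 ≤ p := hq.trans hqp'
  have hp0 : (0 : ℝ) < p := NNReal.coe_pos.2 (one_pos.trans_le hp)
  have hq0 : 0 < q := one_pos.trans_le hq
  set e : ℝ := 1 / q - 1 / p
  set J : ℝ≥0∞ := ∫⁻ z in Ioi (1 : ℝ), ENNReal.ofReal (PC N * z ^ ((1 : ℝ) - N)) ^ (e * p)
  have hJ : J ≠ ∞ := lintegral_Ioi_one_poissonBound_ne_top
    (mul_nonneg (sub_nonneg.2 (one_div_le_one_div_of_le (NNReal.coe_pos.2 hq0) hqp'))
      p.coe_nonneg) (one_sub_dim_mul_lt hqp hq0 (NNReal.coe_pos.1 hp0))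
  refine ⟨(J ^ (1 / p : ℝ)).toNNReal, fun g hg => ?_⟩
  have near : ∫⁻ z in Ioc (0 : ℝ) 1, eLpNorm (poissonExt N g z) p volume ^ (p : ℝ) ≤
      eLpNorm g p volume ^ (p : ℝ) :=
    (setLIntegral_mono' measurableSet_Ioc fun z hz => ENNReal.rpow_le_rpow
      (eLpNorm_poissonExt_le_self hN hz.1 hg hp) p.coe_nonneg).trans_eq (by simp)
  have far : ∫⁻ z in Ioi (1 : ℝ), eLpNorm (poissonExt N g z) p volume ^ (p : ℝ) ≤
      J * eLpNorm g q volume ^ (p : ℝ) := by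
    rw [← lintegral_mul_const _ (by fun_prop)]
    refine setLIntegral_mono' measurableSet_Ioi fun z hz => ?_
    rw [ENNReal.rpow_mul, ← ENNReal.mul_rpow_of_nonneg _ _ p.coe_nonneg]
    exact ENNReal.rpow_le_rpow (eLpNorm_poissonExt_le hN (one_pos.trans hz) hg hq hqp')
      p.coe_nonneg
  refine (ENNReal.rpow_le_rpow_iff hp0).1 ?_
  rw [eLpNorm_halfSpace_rpow (measurable_poissonExt (g := fun _ => g) (hg.comp measurable_snd)
    measurable_snd measurable_fst) (NNReal.coe_pos.1 hp0).ne',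
    ← Ioc_union_Ioi_eq_Ioi (zero_le_one' ℝ)]
  calc _ ≤ eLpNorm g p volume ^ (p : ℝ) + J * eLpNorm g q volume ^ (p : ℝ) :=
        (lintegral_union_le _ _ _).trans (add_le_add near far)
    _ = eLpNorm g p volume ^ (p : ℝ) +
          ((J ^ (1 / p : ℝ)).toNNReal * eLpNorm g q volume) ^ (p : ℝ) := by
        rw [ENNReal.coe_toNNReal (by finiteness), ENNReal.mul_rpow_of_nonneg _ _ hp0.le,
          ← ENNReal.rpow_mul, one_div_mul_cancel hp0.ne', ENNReal.rpow_one]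
    _ ≤ _ := ENNReal.add_rpow_le_rpow_add _ _ hp

lemma eLpNorm_inv_mul_poissonExt_le (hN : 1 ≤ N) {p : ℝ≥0} (hp : 1 < p) {τ : ℝ} (hτ : 0 < τ)
    {g : E' N → ℝ≥0∞} (hg : Measurable g) :
    eLpNorm (fun x : HS N => ENNReal.ofReal (x.2 + τ)⁻¹ * poissonExt N g (x.2 + τ) x.1) p
        (volume.restrict (halfSpace N)) ≤
      ENNReal.ofReal ((p - 1 : ℝ)⁻¹ ^ (1 / p : ℝ) * τ ^ (1 / p - 1 : ℝ)) * eLpNorm g p volume := by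
  have hp' : (1 : ℝ) < p := hp
  have hp0 : (0 : ℝ) < p := one_pos.trans hp'
  have hp1 : 0 ≤ (p - 1 : ℝ)⁻¹ := inv_nonneg.2 (sub_nonneg.2 hp'.le)
  have hp0' : p ≠ 0 := (NNReal.coe_pos.1 hp0).ne'
  have hg' (z : ℝ) : Measurable (poissonExt N g (z + τ)) :=
    measurable_poissonExt (g := fun _ => g) (hg.comp measurable_snd) measurable_const measurable_id
  have hfm : Measurable fun x : HS N =>
      ENNReal.ofReal (x.2 + τ)⁻¹ * poissonExt N g (x.2 + τ) x.1 :=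
    Measurable.mul (by fun_prop) (measurable_poissonExt (g := fun _ => g)
      (hg.comp measurable_snd) (measurable_snd.add_const τ) measurable_fst)
  have slice (z : ℝ) (hz : z ∈ Ioi (0 : ℝ)) :
      eLpNorm (fun x' => ENNReal.ofReal (z + τ)⁻¹ * poissonExt N g (z + τ) x') p volume ^ (p : ℝ) ≤
        ENNReal.ofReal ((z + τ) ^ (-p : ℝ)) * eLpNorm g p volume ^ (p : ℝ) := by
    have hz' : 0 < z + τ := add_pos hz hτ
    rw [eLpNorm_ennreal_const_mul _ (hg' z) hp0', ENNReal.mul_rpow_of_nonneg _ _ hp0.le,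
      ENNReal.ofReal_rpow_of_pos (inv_pos.2 hz'), Real.inv_rpow hz'.le, ← Real.rpow_neg hz'.le]
    gcongr
    exact eLpNorm_poissonExt_le_self hN hz' hg hp.le
  have hconst : -τ ^ (-p + 1 : ℝ) / (-p + 1) =
      ((p - 1 : ℝ)⁻¹ ^ (1 / p : ℝ) * τ ^ (1 / p - 1 : ℝ)) ^ (p : ℝ) := by
    rw [Real.mul_rpow (by positivity) (by positivity), ← Real.rpow_mul hp1, ← Real.rpow_mul hτ.le,
      one_div_mul_cancel hp0.ne', Real.rpow_one, sub_mul, one_div_mul_cancel hp0.ne', one_mul,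
      neg_add_eq_sub, ← neg_sub (p : ℝ) 1, neg_div_neg_eq, div_eq_inv_mul]
  refine (ENNReal.rpow_le_rpow_iff hp0).1 ?_
  calc _ ≤ ∫⁻ z in Ioi (0 : ℝ), ENNReal.ofReal ((z + τ) ^ (-p : ℝ)) *
          eLpNorm g p volume ^ (p : ℝ) :=
        (eLpNorm_halfSpace_rpow hfm hp0').trans_le (setLIntegral_mono' measurableSet_Ioi slice)
    _ = _ := by
        rw [lintegral_mul_const _ (by fun_prop), lintegral_Ioi_add_rpow_of_lt (neg_lt_neg hp') hτ,
          hconst, ← ENNReal.ofReal_rpow_of_nonneg (by positivity) hp0.le,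
          ENNReal.mul_rpow_of_nonneg _ _ hp0.le]

end PoissonExtension


section TimeIntegral

variable {N : ℕ}

lemma measurable_inv_mul_poissonExt {G : E' N → ℝ → ℝ≥0∞} (hG : Measurable (Function.uncurry G))
    (t : ℝ) : Measurable fun z : HS N × ℝ => ENNReal.ofReal (z.1.2 + (t - z.2))⁻¹ *
      poissonExt N (G · z.2) (z.1.2 + (t - z.2)) z.1.1 := by
  refine Measurable.mul (by fun_prop) (measurable_poissonExt (g := fun z : HS N × ℝ => (G · z.2))
    ?_ (by fun_prop) (by fun_prop))
  exact hG.comp (measurable_snd.prodMk (measurable_snd.comp measurable_fst))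

theorem eLpNorm_lintegral_inv_mul_poissonExt_le (hN : 1 ≤ N) {p : ℝ≥0} (hp : 1 < p) {a t : ℝ}
    (ha : 0 < a) (ht : 0 < t) {G : E' N → ℝ → ℝ≥0∞} (hG : Measurable (Function.uncurry G))
    {Y : ℝ≥0∞}
    (hGY : ∀ s ∈ Ioo 0 t, eLpNorm (G · s) p volume ≤ ENNReal.ofReal (s ^ (a - 1)) * Y) :
    eLpNorm (fun x : HS N => ∫⁻ s in Ioo 0 t, ENNReal.ofReal (x.2 + (t - s))⁻¹ *
        poissonExt N (G · s) (x.2 + (t - s)) x.1) p (volume.restrict (halfSpace N)) ≤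
      ENNReal.ofReal ((p - 1 : ℝ)⁻¹ ^ (1 / p : ℝ) *
        (t ^ (a + 1 / p - 1) * ProbabilityTheory.beta a (1 / p))) * Y := by
  have hp' : 0 < (p - 1 : ℝ) := sub_pos.2 hp
  have hp0 : 0 < (1 / p : ℝ) := one_div_pos.2 (NNReal.coe_pos.2 (one_pos.trans hp))
  have slice (s : ℝ) (hs : s ∈ Ioo 0 t) :
      eLpNorm (fun x : HS N => ENNReal.ofReal (x.2 + (t - s))⁻¹ *
          poissonExt N (G · s) (x.2 + (t - s)) x.1) p (volume.restrict (halfSpace N)) ≤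
        ENNReal.ofReal ((p - 1 : ℝ)⁻¹ ^ (1 / p : ℝ)) *
          (ENNReal.ofReal (s ^ (a - 1) * (t - s) ^ (1 / p - 1 : ℝ)) * Y) := by
    have hs0 := hs.1
    calc _ ≤ ENNReal.ofReal ((p - 1 : ℝ)⁻¹ ^ (1 / p : ℝ) * (t - s) ^ (1 / p - 1 : ℝ)) *
            (ENNReal.ofReal (s ^ (a - 1)) * Y) :=
          (eLpNorm_inv_mul_poissonExt_le hN hp (sub_pos.2 hs.2)
            (hG.comp measurable_prodMk_right)).trans (mul_le_mul_right (hGY s hs) _)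
      _ = _ := by
          rw [ENNReal.ofReal_mul (by positivity), ENNReal.ofReal_mul (by positivity)]
          ring
  calc _ ≤ ∫⁻ s in Ioo 0 t, eLpNorm (fun x : HS N => ENNReal.ofReal (x.2 + (t - s))⁻¹ *
          poissonExt N (G · s) (x.2 + (t - s)) x.1) p (volume.restrict (halfSpace N)) :=
        eLpNorm_lintegral_le (measurable_inv_mul_poissonExt hG t) hp.le
    _ ≤ ∫⁻ s in Ioo 0 t, ENNReal.ofReal ((p - 1 : ℝ)⁻¹ ^ (1 / p : ℝ)) *
          (ENNReal.ofReal (s ^ (a - 1) * (t - s) ^ (1 / p - 1 : ℝ)) * Y) :=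
        setLIntegral_mono' measurableSet_Ioo slice
    _ = _ := by
        rw [lintegral_const_mul _ (by fun_prop), lintegral_mul_const _ (by fun_prop),
          lintegral_Ioo_rpow_mul_sub_rpow ha hp0 ht, ← mul_assoc,
          ← ENNReal.ofReal_mul (by positivity)]

end TimeIntegral

section NonlocalOperator

variable {N : ℕ}

lemma enorm_Fop_le (hN : 1 ≤ N) {v : HS N → ℝ → ℝ} {t : ℝ} {G : E' N → ℝ → ℝ≥0∞}
    (hvG : ∀ y, ∀ s ∈ Ioc 0 t, ‖dN N v (y, 0) s‖ₑ ≤ G y s) (ht : 0 < t) {x : HS N}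
    (hx : x ∈ halfSpace N) :
    ‖Fop N v x t‖ₑ ≤ poissonExt N (G · t) x.2 x.1 +
      ENNReal.ofReal N * ∫⁻ s in Ioo 0 t, ENNReal.ofReal (x.2 + (t - s))⁻¹ *
        poissonExt N (G · s) (x.2 + (t - s)) x.1 := by
  have hderiv (y : E' N) (s : ℝ) (hs : s ∈ Ioo 0 t) :
      ‖deriv (fun τ => Pker N (x.1 - y) x.2 τ) (t - s)‖ₑ ≤
        ENNReal.ofReal N * ENNReal.ofReal (x.2 + (t - s))⁻¹ *
          ‖Pker N (x.1 - y) (x.2 + (t - s)) 0‖ₑ := by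
    have ha : 0 < x.2 + (t - s) := add_pos hx (sub_pos.2 hs.2)
    rw [Real.enorm_eq_ofReal_abs, Real.enorm_of_nonneg (Pker_nonneg _ ha.le), mul_assoc,
      ← ENNReal.ofReal_mul (inv_nonneg.2 ha.le), ← ENNReal.ofReal_mul (Nat.cast_nonneg N)]
    exact ENNReal.ofReal_le_ofReal (abs_deriv_Pker_le hN _ ha)
  refine (enorm_add_le _ _).trans (add_le_add ?_ ?_)
  · refine (enorm_integral_le_lintegral_enorm _).trans (lintegral_mono fun y => ?_)
    rw [enorm_mul]
    exact mul_le_mul_right (hvG y t ⟨ht, le_rfl⟩) _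
  · rw [← lintegral_const_mul' _ _ ENNReal.ofReal_ne_top]
    refine (enorm_integral_le_lintegral_enorm _).trans
      (setLIntegral_mono' measurableSet_Ioo fun s hs => ?_)
    rw [← mul_assoc, poissonExt, ← lintegral_const_mul' _ _ (by finiteness)]
    refine (enorm_integral_le_lintegral_enorm _).trans (lintegral_mono fun y => ?_)
    rw [enorm_mul, ← mul_assoc]
    exact mul_le_mul' (hderiv y s hs) (hvG y s (Ioo_subset_Ioc_self hs))

lemma hLpNorm_Fop_le_add (hN : 1 ≤ N) {v : HS N → ℝ → ℝ} {t : ℝ} (ht : 0 < t)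
    {G : E' N → ℝ → ℝ≥0∞} (hG : Measurable (Function.uncurry G))
    (hvG : ∀ y, ∀ s ∈ Ioc 0 t, ‖dN N v (y, 0) s‖ₑ ≤ G y s) {p : ℝ≥0} (hp : 1 ≤ p) :
    hLpNorm N p (Fop N v · t) ≤
      eLpNorm (fun x : HS N => poissonExt N (G · t) x.2 x.1) p (volume.restrict (halfSpace N)) +
      ENNReal.ofReal N * eLpNorm (fun x : HS N => ∫⁻ s in Ioo 0 t,
        ENNReal.ofReal (x.2 + (t - s))⁻¹ * poissonExt N (G · s) (x.2 + (t - s)) x.1) p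
          (volume.restrict (halfSpace N)) := by
  have hspace : Measurable fun x : HS N => poissonExt N (G · t) x.2 x.1 :=
    measurable_poissonExt (g := fun _ => (G · t))
      ((hG.comp measurable_prodMk_right).comp measurable_snd) measurable_snd measurable_fst
  have htime : Measurable fun x : HS N => ∫⁻ s in Ioo 0 t,
      ENNReal.ofReal (x.2 + (t - s))⁻¹ * poissonExt N (G · s) (x.2 + (t - s)) x.1 :=
    (measurable_inv_mul_poissonExt hG t).lintegral_prod_right'
  rw [← eLpNorm_ennreal_const_mul _ htime (one_pos.trans_le hp).ne']
  refine le_trans (eLpNorm_mono_enorm_ae ?_) (eLpNorm_add_le hspace.aestronglyMeasurable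
    (htime.const_mul _).aestronglyMeasurable (by exact_mod_cast hp))
  exact ae_restrict_of_forall_mem (measurableSet_lt measurable_const measurable_snd)
    fun x hx => enorm_Fop_le hN hvG ht hx

theorem exists_hLpNorm_Fop_le {p q : ℝ≥0} (hq : 1 ≤ q) (hqp : (N * q : ℝ) < p * (N - 1)) :
    ∃ C : ℝ≥0, ∀ (v : HS N → ℝ → ℝ) (t : ℝ), 0 < t → ∀ G : E' N → ℝ → ℝ≥0∞,
      Measurable (Function.uncurry G) → (∀ y, ∀ s ∈ Ioc 0 t, ‖dN N v (y, 0) s‖ₑ ≤ G y s) →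
      ∀ Y : ℝ≥0∞, (∀ r ∈ ({q, p} : Set ℝ≥0), ∀ s ∈ Ioc 0 t,
        eLpNorm (G · s) r volume ≤ ENNReal.ofReal (s ^ (-(1 : ℝ) / 2)) * Y) →
      hLpNorm N p (Fop N v · t) ≤
        C * ENNReal.ofReal ((1 + t ^ (1 / p : ℝ)) * t ^ (-(1 : ℝ) / 2)) * Y := by
  have hqp' : q < p := lt_of_dim_mul_lt hqp
  have hp : 1 < p := hq.trans_lt hqp'
  have hN : 1 ≤ N := one_le_dim_of_mul_lt hqp
  obtain ⟨C, hC⟩ := exists_eLpNorm_poissonExt_halfSpace_le hq hqp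
  set D : ℝ := (p - 1 : ℝ)⁻¹ ^ (1 / p : ℝ) * ProbabilityTheory.beta (1 / 2) (1 / p)
  refine ⟨1 + C + N * D.toNNReal, fun v t ht G hG hvG Y hGY => ?_⟩
  have hD : ENNReal.ofReal ((p - 1 : ℝ)⁻¹ ^ (1 / p : ℝ) * (t ^ (1 / 2 + 1 / p - 1 : ℝ) *
      ProbabilityTheory.beta (1 / 2) (1 / p))) = ENNReal.ofReal D *
        (ENNReal.ofReal (t ^ (1 / p : ℝ)) * ENNReal.ofReal (t ^ (-(1 : ℝ) / 2))) := by
    rw [← ENNReal.ofReal_mul (by positivity), ← Real.rpow_add ht,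
      ← ENNReal.ofReal_mul' (by positivity)]
    simp only [D]
    ring_nf
  have space := (hC (G · t) (hG.comp measurable_prodMk_right)).trans <|
    add_le_add (hGY p (.inr rfl) t ⟨ht, le_rfl⟩)
      (mul_le_mul_right (hGY q (.inl rfl) t ⟨ht, le_rfl⟩) _)
  have time := eLpNorm_lintegral_inv_mul_poissonExt_le hN hp one_half_pos ht hG (Y := Y)
    fun s hs => (hGY p (.inr rfl) s (Ioo_subset_Ioc_self hs)).trans_eq (by norm_num)
  rw [hD] at time
  rw [ENNReal.ofReal_mul (by positivity), ENNReal.ofReal_add zero_le_one (by positivity),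
    ENNReal.ofReal_one]
  push_cast [ENNReal.ofNNReal_toNNReal]
  refine (hLpNorm_Fop_le_add hN ht hG hvG hp.le).trans
    ((add_le_add space (mul_le_mul_right time _)).trans ?_)
  rw [ENNReal.ofReal_natCast]
  generalize ENNReal.ofReal (t ^ (-(1 : ℝ) / 2)) = S
  generalize ENNReal.ofReal (t ^ (1 / p : ℝ)) = R
  calc _ ≤ _ + ((1 + C) * R + N * ENNReal.ofReal D) * (S * Y) := le_self_add
    _ = _ := by ring

lemma bLpNorm_dN_le {q p r : ℝ≥0∞} {T M : ℝ} (v : HS N → ℝ → ℝ) (hr : r ∈ Icc q p) {s t : ℝ}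
    (hs : s ∈ Ioo 0 T) (hst : s ≤ t) (hM : 0 ≤ M) :
    bLpNorm N r (fun x' => dN N v (x', 0) s) ≤ ENNReal.ofReal (s ^ (-(1 : ℝ) / 2)) *
      (ENNReal.ofReal (Real.exp (M * t)) * XNorm N q p T M v) := by
  have hs0 := hs.1
  set b := bLpNorm N r (fun x' => dN N v (x', 0) s)
  have norm_le : ENNReal.ofReal (Real.exp (-M * s)) * (ENNReal.ofReal (s ^ ((1 : ℝ) / 2)) * b) ≤
      XNorm N q p T M v :=
    calc _ ≤ ENNReal.ofReal (Real.exp (-M * s)) * Enorm N q p v s := by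
          gcongr
          exact (le_iSup₂ (f := fun r _ => ENNReal.ofReal (s ^ ((1 : ℝ) / 2)) *
            bLpNorm N r (fun x' => dN N v (x', 0) s)) r hr).trans le_add_self
      _ ≤ _ := le_iSup₂ (f := fun s _ => ENNReal.ofReal (Real.exp (-M * s)) * Enorm N q p v s) s hs
  have cancel : s ^ (-(1 : ℝ) / 2) * Real.exp (M * s) * Real.exp (-M * s) *
      s ^ ((1 : ℝ) / 2) = 1 := by
    rw [mul_assoc (s ^ _), ← Real.exp_add, mul_right_comm, ← Real.rpow_add hs0]
    norm_num
  calc b = ENNReal.ofReal (s ^ (-(1 : ℝ) / 2)) * (ENNReal.ofReal (Real.exp (M * s)) *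
        (ENNReal.ofReal (Real.exp (-M * s)) * (ENNReal.ofReal (s ^ ((1 : ℝ) / 2)) * b))) := by
        simp only [← mul_assoc]
        rw [← ENNReal.ofReal_mul (by positivity), ← ENNReal.ofReal_mul (by positivity),
          ← ENNReal.ofReal_mul (by positivity), cancel, ENNReal.ofReal_one, one_mul]
    _ ≤ _ := by gcongr

end NonlocalOperator

lemma memX.measurable_dN_trace {N : ℕ} {q p : ℝ≥0∞} {T M : ℝ} {v : HS N → ℝ → ℝ}
    (hv : memX N q p T M v) :
    Measurable fun z : E' N × Ioo (0 : ℝ) T => dN N v (z.1, 0) z.2 :=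
  (hv.2.1.comp_continuous (f := fun z : E' N × Ioo (0 : ℝ) T => (((z.1, 0) : HS N), (z.2 : ℝ)))
    (by fun_prop) fun z => ⟨le_refl (0 : ℝ), z.2.2⟩).measurable

lemma natCast_mul_lt_mul_sub_one {N : ℕ} (hN : 2 ≤ N) {q p : ℝ≥0}
    (h : (N * q / (N - 1) : ℝ≥0∞) < p) : (N * q : ℝ) < p * (N - 1) := by
  have hN' : (0 : ℝ) < N - 1 := sub_pos.2 (by exact_mod_cast hN)
  have h' := (ENNReal.toReal_lt_toReal h.ne_top ENNReal.coe_ne_top).2 h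
  rwa [ENNReal.toReal_div, ENNReal.toReal_mul, ENNReal.toReal_natCast, ENNReal.coe_toReal,
    ENNReal.coe_toReal, ENNReal.toReal_sub_of_le (by exact_mod_cast one_le_two.trans hN) (by simp),
    ENNReal.toReal_natCast, ENNReal.toReal_one, div_lt_iff₀ hN'] at h'

theorem stmt_3_general (N : ℕ) (q p : ℝ≥0) (hq : 1 ≤ q) (hqp : (N * q : ℝ) < p * (N - 1)) :
    ∃ C : ℝ, 0 < C ∧ ∀ T M : ℝ, 0 ≤ M → ∀ v : HS N → ℝ → ℝ,
      Measurable (fun z : E' N × Ioo (0 : ℝ) T => dN N v (z.1, 0) z.2) → ∀ t ∈ Ioo (0 : ℝ) T,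
        hLpNorm N p (fun x => Fop N v x t) ≤
          ENNReal.ofReal (C * (1 + t ^ (1 / p : ℝ)) * t ^ (-(1 : ℝ) / 2) * Real.exp (M * t)) *
            XNorm N q p T M v := by
  obtain ⟨C, hC⟩ := exists_hLpNorm_Fop_le hq hqp
  refine ⟨C + 1, by positivity, fun T M hM v hv t ht => ?_⟩
  have ht0 := ht.1
  have hqp' : q ≤ p := (lt_of_dim_mul_lt hqp).le
  have hsub {s : ℝ} (hs : s ∈ Ioc 0 t) : s ∈ Ioo 0 T := ⟨hs.1, hs.2.trans_lt ht.2⟩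
  obtain ⟨ψ, hψm, hψ⟩ := (MeasurableEmbedding.id.prodMap
    (.subtype_coe measurableSet_Ioo)).exists_measurable_extend hv fun _ => inferInstance
  have hvψ (y : E' N) (s : ℝ) (hs : s ∈ Ioc 0 t) : ψ (y, s) = dN N v (y, 0) s :=
    congr_fun hψ (y, ⟨s, hsub hs⟩)
  refine (hC v t ht.1 (fun y s => ‖ψ (y, s)‖ₑ) hψm.enorm
    (fun y s hs => by rw [hvψ y s hs]) (ENNReal.ofReal (Real.exp (M * t)) * XNorm N q p T M v)
    fun r hr s hs => ?_).trans ?_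
  · have hr' : (r : ℝ≥0∞) ∈ Icc (q : ℝ≥0∞) p := by
      rcases hr with rfl | rfl <;> simpa using hqp'
    rw [eLpNorm_enorm]
    simp_rw [hvψ _ s hs]
    exact bLpNorm_dN_le v hr' (hsub hs) hs.2 hM
  · rw [← ENNReal.ofReal_coe_nnreal (p := C), ← mul_assoc, ← ENNReal.ofReal_mul (by positivity),
      ← ENNReal.ofReal_mul (by positivity), ← mul_assoc (C : ℝ)]
    gcongr
    linarith

/-- let `1 ≤ q < ∞` and `p ∈ (Nq/(N-1), ∞)`. There exists `C > 0`,
independent of `T` and `M`, such that for all `T > 0`, `M ≥ 1` and `v ∈ X_{T,M}`: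
`‖F[v](·,t)‖_{L^p(ℝ^N_+)} ≤ C (1 + t^{1/p}) t^{-1/2} e^{Mt} ‖v‖_{X_{T,M}}`
for all `0 < t < T`. -/
theorem stmt_3 (N : ℕ) (hN : 2 ≤ N) (q p : ℝ≥0∞) (hq1 : 1 ≤ q) (hq2 : q ≠ ∞)
    (hp1 : (N : ℝ≥0∞) * q / ((N : ℝ≥0∞) - 1) < p) (hp2 : p ≠ ∞) :
    ∃ C : ℝ, 0 < C ∧ ∀ T M : ℝ, 0 < T → 1 ≤ M → ∀ v : HS N → ℝ → ℝ,
      memX N q p T M v → ∀ t ∈ Ioo (0 : ℝ) T,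
        hLpNorm N p (fun x => Fop N v x t) ≤
          ENNReal.ofReal
              (C * (1 + t ^ (p⁻¹).toReal) * t ^ (-(1 : ℝ) / 2) * Real.exp (M * t)) *
            XNorm N q p T M v := by
  lift q to ℝ≥0 using hq2
  lift p to ℝ≥0 using hp2
  obtain ⟨C, hC0, hC⟩ := stmt_3_general N q p (by exact_mod_cast hq1)
    (natCast_mul_lt_mul_sub_one hN hp1)
  refine ⟨C, hC0, fun T M _ hM v hv t ht => ?_⟩
  simpa using hC T M (zero_le_one.trans hM) v hv.measurable_dN_trace t ht

end
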